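/- arXiv:0904.4196 — 2 statements merged into one kernel-verified Lean document; each statement's English description precedes it below -/
import Mathlib

section
/- Factorization count in the category Cₙ of strictly increasing sequences: for natural numbers j ≤ k ≤ i and every order embedding e : Fin j ↪o Fin i, the number of pairs (g, h) with g : Fin k ↪o Fin i, h : Fin j ↪o Fin k, and g ∘ h = e (as functions) is exactly Nat.choose (i - j) (k - j). -/
/-!
A factorization `e = g ∘ h` is determined by the range of `g`: an order embedding of `Fin k` is
determined by its range, and `h` is then forced because `g` is injective. The possible ranges are
exactly the `k`-element sets containing the range `E` of `e`. Removing `E` from such a set gives a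
bijection with the `(k - j)`-element subsets of the complement of `E`, which has `i - j` elements.
-/

/-- Factorization count in the category `Cₙ` of strictly increasing sequences:
for `j ≤ k ≤ i` and an order embedding `e : Fin j ↪o Fin i`, the number of
pairs `(g, h)` with `g : Fin k ↪o Fin i`, `h : Fin j ↪o Fin k` and
`g ∘ h = e` is `(i - j).choose (k - j)`. -/
theorem Cn_factorization_count (i j k : ℕ) (hjk : j ≤ k) (hki : k ≤ i)
    (e : Fin j ↪o Fin i) :
    Nat.card {p : (Fin k ↪o Fin i) × (Fin j ↪o Fin k) // ⇑p.1 ∘ ⇑p.2 = ⇑e} =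
      Nat.choose (i - j) (k - j) := by
  set E : Finset (Fin i) := Finset.univ.map e.toEmbedding with hE
  have hEcard : E.card = j := by simp [hE]
  have hsub : ∀ p : {p : (Fin k ↪o Fin i) × (Fin j ↪o Fin k) // ⇑p.1 ∘ ⇑p.2 = ⇑e},
      E ⊆ Finset.univ.map p.1.1.toEmbedding := by
    rintro ⟨⟨g, h⟩, hp⟩ x hx
    obtain ⟨a, -, rfl⟩ := Finset.mem_map.1 hx
    exact Finset.mem_map.2 ⟨h a, Finset.mem_univ _, congrFun hp a⟩
  let F : {p : (Fin k ↪o Fin i) × (Fin j ↪o Fin k) // ⇑p.1 ∘ ⇑p.2 = ⇑e} →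
      (Finset.powersetCard (k - j) Eᶜ : Finset (Finset (Fin i))) := fun p =>
    ⟨Finset.univ.map p.1.1.toEmbedding \ E, by
      rw [Finset.mem_powersetCard]
      refine ⟨fun x hx => Finset.mem_compl.2 (Finset.mem_sdiff.1 hx).2, ?_⟩
      rw [Finset.card_sdiff_of_subset (hsub p), hEcard]
      simp⟩
  have hF : Function.Bijective F := by
    constructor
    · intro p q hpq
      have h1 : Finset.univ.map p.1.1.toEmbedding = Finset.univ.map q.1.1.toEmbedding := by
        rw [← Finset.sdiff_union_of_subset (hsub p), ← Finset.sdiff_union_of_subset (hsub q)]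
        exact congrArg (· ∪ E) (congrArg Subtype.val hpq)
      obtain ⟨⟨g, h⟩, hp⟩ := p
      obtain ⟨⟨g', h'⟩, hq⟩ := q
      have h2 : Set.range g = Set.range g' := by
        simpa using congrArg (fun s : Finset (Fin i) => (s : Set (Fin i))) h1
      obtain rfl : g = g' :=
        DFunLike.coe_injective ((g.strictMono.range_inj g'.strictMono).1 h2)
      obtain rfl : h = h' := by
        ext1 x
        exact g.injective (congrFun (hp.trans hq.symm) x)
      rfl
    · rintro ⟨T, hT⟩
      obtain ⟨hTE, hTc⟩ := Finset.mem_powersetCard.1 hT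
      have hd : Disjoint T E := Finset.disjoint_left.2 fun x hx => Finset.mem_compl.1 (hTE hx)
      have hS : (T ∪ E).card = k := by
        rw [Finset.card_union_of_disjoint hd, hTc, hEcard]
        omega
      have hmem : ∀ x, e x ∈ T ∪ E := fun x =>
        Finset.mem_union_right _ (Finset.mem_map.2 ⟨x, Finset.mem_univ _, rfl⟩)
      -- `h` is the rank of `e x` in the set `T ∪ E` enumerated by `g`.
      let h : Fin j ↪o Fin k := OrderEmbedding.ofStrictMono
        (fun x => ((T ∪ E).orderIsoOfFin hS).symm ⟨e x, hmem x⟩) (fun x y hxy =>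
          ((T ∪ E).orderIsoOfFin hS).symm.strictMono (e.strictMono hxy))
      refine ⟨⟨((T ∪ E).orderEmbOfFin hS, h), ?_⟩, ?_⟩
      · funext x
        exact congrArg Subtype.val
          (((T ∪ E).orderIsoOfFin hS).apply_symm_apply ⟨e x, hmem x⟩)
      · apply Subtype.ext
        change Finset.univ.map ((T ∪ E).orderEmbOfFin hS).toEmbedding \ E = T
        rw [Finset.map_orderEmbOfFin_univ, Finset.union_sdiff_cancel_right hd]
  rw [Nat.card_eq_of_bijective F hF, Nat.card_eq_fintype_card, Fintype.card_coe,
    Finset.card_powersetCard, Finset.card_compl, hEcard, Fintype.card_fin]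
end

section
/- The Möbius function of the category Cₙ is μ(α) = (−1)^(i−j) for a morphism α : i → j; precisely, the convolution identity ζ * μ = δ holds: for all natural numbers j ≤ i and every order embedding e : Fin j ↪o Fin i, the sum over k from j to i of (−1)^(i−k) times the number of pairs (g, h) with g : Fin k ↪o Fin i, h : Fin j ↪o Fin k and g ∘ h = e equals 1 if i = j and 0 otherwise. -/
/-!
A factorization `e = g ∘ h` through `Fin k` is determined by the range of `g`, which can be any
`k`-element subset of `Fin i` containing the range of `e`. Passing to complements, the
factorizations correspond to the `(i - k)`-element subsets of the `(i - j)`-element complement of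
the range of `e`, so there are `(i - j).choose (i - k)` of them (`card_factorizations`). The claim
is then the vanishing of the alternating sum of the binomial coefficients of `i - j`, unless
`i - j = 0`.
-/

/-- The bijection sends a factorization `(g, h)` to the complement of the range of `g`. -/
lemma card_factorizations {i j k : ℕ} (hki : k ≤ i) (e : Fin j ↪o Fin i) :
    Nat.card {p : (Fin k ↪o Fin i) × (Fin j ↪o Fin k) // ⇑p.1 ∘ ⇑p.2 = ⇑e} =
      (i - j).choose (i - k) := by
  classical
  set C : Finset (Fin i) := (Finset.univ.image e)ᶜ with hC
  have hCcard : C.card = i - j := by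
    rw [hC, Finset.card_compl, Finset.card_image_of_injective _ e.injective]
    simp
  rw [← hCcard, ← Finset.card_powersetCard, ← Nat.card_eq_finsetCard]
  have hmem : ∀ p : {p : (Fin k ↪o Fin i) × (Fin j ↪o Fin k) // ⇑p.1 ∘ ⇑p.2 = ⇑e},
      (Finset.univ.image p.1.1)ᶜ ∈ Finset.powersetCard (i - k) C := by
    rintro ⟨⟨g, h⟩, hgh⟩
    rw [Finset.mem_powersetCard]
    constructor
    · rw [hC, Finset.compl_subset_compl]
      intro x hx
      obtain ⟨a, -, rfl⟩ := Finset.mem_image.1 hx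
      exact Finset.mem_image.2 ⟨h a, Finset.mem_univ _, congrFun hgh a⟩
    · rw [Finset.card_compl, Finset.card_image_of_injective _ g.injective]
      simp
  refine Nat.card_eq_of_bijective (fun p => ⟨_, hmem p⟩) ⟨?_, ?_⟩
  · rintro ⟨⟨g, h⟩, hgh⟩ ⟨⟨g', h'⟩, hgh'⟩ heq
    have himg : Finset.univ.image g = Finset.univ.image g' :=
      compl_injective (Subtype.ext_iff.1 heq)
    have hg : g = g' := by
      apply OrderEmbedding.range_inj.1
      simpa using congrArg (fun s : Finset (Fin i) => (s : Set (Fin i))) himg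
    subst hg
    have hh : h = h' := by
      ext a
      exact congrArg Fin.val (g.injective (congrFun (hgh.trans hgh'.symm) a))
    subst hh
    rfl
  · rintro ⟨T, hT⟩
    obtain ⟨hTC, hTcard⟩ := Finset.mem_powersetCard.1 hT
    have hS : Tᶜ.card = k := by
      rw [Finset.card_compl, hTcard, Fintype.card_fin]
      omega
    have he : ∀ a, e a ∈ Tᶜ := fun a => by
      rw [Finset.mem_compl]
      intro ha
      have := hTC ha
      simp [hC] at this
    -- `g` enumerates `Tᶜ` increasingly, and `h` is `e` read through that enumeration.
    let e' : Fin j ↪o (Tᶜ : Finset (Fin i)) :=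
      OrderEmbedding.ofMapLEIff (fun a => ⟨e a, he a⟩) fun a b => by simp
    let h : Fin j ↪o Fin k := e'.trans (Tᶜ.orderIsoOfFin hS).symm.toOrderEmbedding
    refine ⟨⟨(Tᶜ.orderEmbOfFin hS, h), ?_⟩, ?_⟩
    · funext a
      change Tᶜ.orderEmbOfFin hS ((Tᶜ.orderIsoOfFin hS).symm (e' a)) = e a
      rw [← Finset.coe_orderIsoOfFin_apply, OrderIso.apply_symm_apply]
      rfl
    · apply Subtype.ext
      change (Finset.univ.image (Tᶜ.orderEmbOfFin hS))ᶜ = T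
      rw [Finset.image_orderEmbOfFin_univ, compl_compl]

/-- The Möbius function of the category `Cₙ` is `μ(α) = (-1) ^ (i - j)` for a
morphism `α : i → j`: the convolution identity `ζ * μ = δ` holds, i.e. for
`j ≤ i` and any order embedding `e : Fin j ↪o Fin i`, summing
`(-1) ^ (i - k)` times the number of factorizations of `e` through `Fin k`
over `j ≤ k ≤ i` gives `1` if `i = j` and `0` otherwise. -/
theorem Cn_zeta_mul_mu (i j : ℕ) (hji : j ≤ i) (e : Fin j ↪o Fin i) :
    (∑ k ∈ Finset.Icc j i, (-1 : ℤ) ^ (i - k) *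
        Nat.card {p : (Fin k ↪o Fin i) × (Fin j ↪o Fin k) // ⇑p.1 ∘ ⇑p.2 = ⇑e}) =
      if i = j then 1 else 0 := by
  have hcount : ∀ k ∈ Finset.Icc j i, (-1 : ℤ) ^ (i - k) *
      Nat.card {p : (Fin k ↪o Fin i) × (Fin j ↪o Fin k) // ⇑p.1 ∘ ⇑p.2 = ⇑e} =
      (-1 : ℤ) ^ (i - k) * ((i - j).choose (i - k) : ℕ) := fun k hk => by
    rw [card_factorizations (Finset.mem_Icc.1 hk).2 e]
  rw [Finset.sum_congr rfl hcount]
  have hreindex : ∑ k ∈ Finset.Icc j i, (-1 : ℤ) ^ (i - k) * ((i - j).choose (i - k) : ℕ) =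
      ∑ m ∈ Finset.range (i - j + 1), (-1 : ℤ) ^ m * ((i - j).choose m : ℕ) := by
    refine Finset.sum_bij' (fun k _ => i - k) (fun m _ => i - m) ?_ ?_ ?_ ?_ (fun _ _ => rfl) <;>
      simp only [Finset.mem_Icc, Finset.mem_range] <;> omega
  rw [hreindex, Int.alternating_sum_range_choose]
  exact if_congr (by omega) rfl rfl
end
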